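/- Let k ∈ σ ⊆ {1,...,n}. With sgn(j,σ) = (-1)^{i-1} where j is the i-th smallest element of σ, and p(σ) = ∏_{i∈σ} (-1)^{i-1}, one has sgn(k,σ) · p(σ∖{k}) = sgn(k, ({1,...,n}∖σ) ∪ {k}) · p(σ). -/

import Mathlib

/-!
Write `a` and `b` for the number of elements below `k` in `σ` and in its complement in `{1,…,n}`.
Together these elements are `1, …, k-1`, so `a + b = k - 1`. Since
`p σ = (-1)^(k-1) * p (σ.erase k)`, the right-hand side is `(-1)^b * (-1)^(a+b) * p (σ.erase k)`,
which equals `(-1)^a * p (σ.erase k)`.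
-/

open Finset

/-- `sgn j σ = (-1)^(i-1)` where `j` is the `i`-th smallest element of `σ`;
equivalently, `(-1)` raised to the number of elements of `σ` smaller than `j`. -/
def sgn (j : ℕ) (σ : Finset ℕ) : ℤ := (-1) ^ (σ.filter (fun x => x < j)).card

/-- `p σ = ∏_{i ∈ σ} (-1)^(i-1)`. -/
def p (σ : Finset ℕ) : ℤ := ∏ i ∈ σ, (-1 : ℤ) ^ (i - 1)

/-- Lemma 2.1 of the paper: for `k ∈ σ ⊆ {1,…,n}`,
`sgn(k,σ) · p(σ∖{k}) = sgn(k, ({1,…,n}∖σ) ∪ {k}) · p(σ)`. -/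
theorem sgn_p_identity (n k : ℕ) (σ : Finset ℕ)
    (hσ : σ ⊆ Finset.Icc 1 n) (hk : k ∈ σ) :
    sgn k σ * p (σ.erase k) = sgn k (insert k (Finset.Icc 1 n \ σ)) * p σ := by
  -- The elements of `{1,…,n}` below `k` are `1, …, k-1`, split between `σ` and its complement.
  have hcard : (σ.filter (fun x => x < k)).card +
      ((insert k (Finset.Icc 1 n \ σ)).filter (fun x => x < k)).card = k - 1 := by
    have hkn := Finset.mem_Icc.mp (hσ hk)
    rw [← Finset.card_union_of_disjoint]
    · have : σ.filter (fun x => x < k) ∪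
          (insert k (Finset.Icc 1 n \ σ)).filter (fun x => x < k) = Finset.Ico 1 k := by
        ext x
        have hx : x ∈ σ → 1 ≤ x ∧ x ≤ n := fun h => Finset.mem_Icc.mp (hσ h)
        simp only [Finset.mem_union, Finset.mem_filter, Finset.mem_insert, Finset.mem_sdiff,
          Finset.mem_Icc, Finset.mem_Ico]
        by_cases h : x ∈ σ
        · have := hx h
          simp only [h, true_and, false_and, and_true, and_false, not_true_eq_false, not_false_eq_true,
            or_false, false_or]
          omega
        · simp only [h, true_and, false_and, and_true, and_false, not_true_eq_false, not_false_eq_true,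
            or_false, false_or]
          omega
      rw [this, Nat.card_Ico]
    · rw [Finset.disjoint_left]
      intro x hx hx'
      simp only [Finset.mem_filter, Finset.mem_insert, Finset.mem_sdiff] at hx hx'
      rcases hx'.1 with h | h
      · omega
      · exact h.2 hx.1
  have hp : p σ = (-1) ^ (k - 1) * p (σ.erase k) := (Finset.mul_prod_erase σ _ hk).symm
  rw [hp, ← hcard, pow_add]
  unfold sgn
  generalize ((insert k (Finset.Icc 1 n \ σ)).filter (fun x => x < k)).card = b
  -- The sign of `k` in the complement occurs twice, hence cancels.
  have hb : ((-1 : ℤ) ^ b) * (-1) ^ b = 1 := by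
    rw [← mul_pow]
    simp
  linear_combination (-((-1 : ℤ) ^ (σ.filter (fun x => x < k)).card * p (σ.erase k))) * hb
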